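/- For general points: ℓ(L(2e+8, 2e−2, 6^{2e})) = 44 − 20e for 1 ≤ e ≤ 2 (virtual dimension −20e + 43); ℓ(L(10, 0, 6^3)) = 5 (virtual dimension 2); and ℓ(L(14, 4, 6^5)) = 5 (virtual dimension 4); in particular all these systems are special. -/

import Mathlib

open MvPolynomial

/-- The iterated partial derivative corresponding to the multi-index `ν`. -/
noncomputable def mderiv (ν : Fin 3 → ℕ) :
    MvPolynomial (Fin 3) ℂ →ₗ[ℂ] MvPolynomial (Fin 3) ℂ :=
  ((pderiv (R := ℂ) (0 : Fin 3)).toLinearMap ^ ν 0) ∘ₗ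
  ((pderiv (R := ℂ) (1 : Fin 3)).toLinearMap ^ ν 1) ∘ₗ
  ((pderiv (R := ℂ) (2 : Fin 3)).toLinearMap ^ ν 2)

/-- The linear system `L(d; m)` of homogeneous forms of degree `d` in three variables
all of whose partial derivatives of order `< m i` vanish at the point `p i`,
i.e. plane curves of degree `d` with multiplicity at least `m i` at `p i`. -/
noncomputable def linSys {k : ℕ} (p : Fin k → Fin 3 → ℂ) (d : ℕ) (m : Fin k → ℕ) :
    Submodule ℂ (MvPolynomial (Fin 3) ℂ) :=
  (homogeneousSubmodule (Fin 3) ℂ d) ⊓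
    ⨅ (i : Fin k), ⨅ (ν : Fin 3 → ℕ), ⨅ (_ : ν 0 + ν 1 + ν 2 < m i),
      LinearMap.ker ((aeval (p i)).toLinearMap ∘ₗ mderiv ν)

/-- The projective dimension `ℓ` of the linear system (`-1` means empty). -/
noncomputable def projDim {k : ℕ} (p : Fin k → Fin 3 → ℂ) (d : ℕ) (m : Fin k → ℕ) : ℤ :=
  (Module.finrank ℂ (linSys p d m) : ℤ) - 1

/-- The virtual dimension `v = d(d+3)/2 - ∑ mᵢ(mᵢ+1)/2`. -/
def virtDim {k : ℕ} (d : ℕ) (m : Fin k → ℕ) : ℤ :=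
  ((d : ℤ) * (d + 3)) / 2 - ∑ i : Fin k, ((m i : ℤ) * (m i + 1)) / 2

/-- The quasi-homogeneous multiplicity vector `(m₀, 6, …, 6)` on `n + 1` points. -/
def qh (n m0 : ℕ) : Fin (n + 1) → ℕ := fun i => if i = 0 then m0 else 6

/-- A property `Q` of configurations of `k` points of `ℙ²` (given by nonzero homogeneous
coordinate vectors) holds for points in general position: there is a nonzero polynomial
in the coordinates such that `Q` holds whenever it does not vanish. -/
def Generically (k : ℕ) (Q : (Fin k → Fin 3 → ℂ) → Prop) : Prop :=
  ∃ P : MvPolynomial (Fin k × Fin 3) ℂ, P ≠ 0 ∧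
    ∀ p : Fin k → Fin 3 → ℂ, (∀ i, p i ≠ 0) →
      eval (fun x => p x.1 x.2) P ≠ 0 → Q p

/-- The Taylor expansion `f (p + t X)`, as a polynomial in `t`. -/
noncomputable def taylorAt (p : Fin 3 → ℂ) :
    MvPolynomial (Fin 3) ℂ →ₐ[ℂ] Polynomial (MvPolynomial (Fin 3) ℂ) :=
  aeval fun i => Polynomial.C (C (p i)) + Polynomial.X * Polynomial.C (X i)

theorem taylorAt_X (p : Fin 3 → ℂ) (i : Fin 3) :
    taylorAt p (X i) = Polynomial.C (C (p i)) + Polynomial.X * Polynomial.C (X i) := by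
  simp [taylorAt]

theorem taylorAt_coeff_zero (p : Fin 3 → ℂ) (f : MvPolynomial (Fin 3) ℂ) :
    (taylorAt p f).coeff 0 = C (aeval p f) := by
  induction f using MvPolynomial.induction_on with
  | C a => simp
  | add f g hf hg => simp [hf, hg]
  | mul_X f i hf => simp [hf, taylorAt_X, Polynomial.mul_coeff_zero]

theorem derivative_taylorAt (p : Fin 3 → ℂ) (f : MvPolynomial (Fin 3) ℂ) :
    Polynomial.derivative (taylorAt p f) =
      ∑ i, Polynomial.C (X i) * taylorAt p (pderiv i f) := by
  induction f using MvPolynomial.induction_on with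
  | C a => simp
  | add f g hf hg => simp [hf, hg, mul_add, Finset.sum_add_distrib]
  | mul_X f j hf =>
    have h : ∀ i, Polynomial.C (X i) * taylorAt p (pderiv i (f * X j)) =
        Polynomial.C (X i) * taylorAt p (pderiv i f) * taylorAt p (X j) +
        if i = j then Polynomial.C (X i) * taylorAt p f else 0 := by
      intro i
      rw [Derivation.leibniz, pderiv_X]
      by_cases hij : i = j
      · subst hij
        simp; ring
      · simp [hij, Ne.symm hij]; ring
    rw [Finset.sum_congr rfl fun i _ => h i, Finset.sum_add_distrib, ← Finset.sum_mul, ← hf,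
      map_mul, Polynomial.derivative_mul, Finset.sum_ite_eq']
    simp [taylorAt_X]; ring

theorem pderiv_taylorAt_coeff (p : Fin 3 → ℂ) (i : Fin 3) (f : MvPolynomial (Fin 3) ℂ) (n : ℕ) :
    pderiv i ((taylorAt p f).coeff (n + 1)) = (taylorAt p (pderiv i f)).coeff n := by
  induction f using MvPolynomial.induction_on generalizing n with
  | C a => simp
  | add f g hf hg => simp [hf, hg]
  | mul_X f j hf =>
    have e : ∀ g : MvPolynomial (Fin 3) ℂ, ∀ n, (taylorAt p (g * X j)).coeff (n + 1) =
        (taylorAt p g).coeff (n + 1) * C (p j) + (taylorAt p g).coeff n * X j := by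
      intro g n
      rw [map_mul, taylorAt_X, mul_add, Polynomial.coeff_add, Polynomial.coeff_mul_C,
        ← mul_assoc, Polynomial.coeff_mul_C, Polynomial.coeff_mul_X]
    have e0 : ∀ g : MvPolynomial (Fin 3) ℂ, (taylorAt p (g * X j)).coeff 0 =
        (taylorAt p g).coeff 0 * C (p j) := by
      intro g
      simp [taylorAt_X, Polynomial.mul_coeff_zero]
    have d : pderiv i (f * X j) = pderiv i f * X j + (if i = j then f else 0) := by
      rw [Derivation.leibniz, pderiv_X]
      by_cases hij : i = j
      · subst hij; simp; ring
      · simp [hij, Ne.symm hij]; ring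
    have dX : pderiv i (X j : MvPolynomial (Fin 3) ℂ) = if i = j then 1 else 0 := by
      rw [pderiv_X, Pi.single_apply]
      simp only [eq_comm]
    rw [e, d, map_add, map_add, Polynomial.coeff_add, pderiv_mul, pderiv_mul, hf, pderiv_C, dX]
    cases n with
    | zero =>
      rw [e0, taylorAt_coeff_zero p f, pderiv_C]
      split_ifs <;> simp [taylorAt_coeff_zero]
    | succ n =>
      rw [e, hf]
      split_ifs
      · simp; ring
      · simp

theorem X_pow_succ_dvd_taylorAt_iff (p : Fin 3 → ℂ) (f : MvPolynomial (Fin 3) ℂ) (m : ℕ) :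
    Polynomial.X ^ (m + 1) ∣ taylorAt p f ↔
      aeval p f = 0 ∧ ∀ i, Polynomial.X ^ m ∣ taylorAt p (pderiv i f) := by
  simp only [Polynomial.X_pow_dvd_iff]
  constructor
  · intro h
    refine ⟨?_, fun i d hd => ?_⟩
    · have := h 0 (Nat.succ_pos m)
      rw [taylorAt_coeff_zero] at this
      simpa using this
    · rw [← pderiv_taylorAt_coeff, h _ (Nat.succ_lt_succ hd), map_zero]
  · rintro ⟨h0, h⟩ d hd
    cases d with
    | zero => rw [taylorAt_coeff_zero, h0, map_zero]
    | succ d =>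
      have h1 := congrArg (fun q => Polynomial.coeff q d) (derivative_taylorAt p f)
      simp only [Polynomial.coeff_derivative, Polynomial.finsetSum_coeff,
        Polynomial.coeff_C_mul] at h1
      rw [Finset.sum_eq_zero fun i _ => by rw [h i d (by omega), mul_zero]] at h1
      refine (mul_eq_zero.mp h1).resolve_right ?_
      exact_mod_cast Nat.succ_ne_zero d

theorem pderiv_commute (i j : Fin 3) :
    Commute (pderiv (R := ℂ) i).toLinearMap (pderiv (R := ℂ) j).toLinearMap := by
  have h : ⁅pderiv (R := ℂ) i, pderiv (R := ℂ) j⁆ = 0 := by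
    apply derivation_ext
    intro k
    rw [Derivation.commutator_apply, pderiv_X, pderiv_X]
    simp only [Pi.single_apply]
    split_ifs <;> simp
  refine LinearMap.ext fun f => ?_
  have := congrArg (fun D : Derivation ℂ _ _ => D f) h
  simpa [Derivation.commutator_apply, sub_eq_zero] using this

theorem mderiv_eq_mul (ν : Fin 3 → ℕ) : mderiv ν =
    (pderiv (R := ℂ) (0 : Fin 3)).toLinearMap ^ ν 0 *
      ((pderiv (R := ℂ) (1 : Fin 3)).toLinearMap ^ ν 1 *
        (pderiv (R := ℂ) (2 : Fin 3)).toLinearMap ^ ν 2) := rfl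

theorem mderiv_pderiv (ν : Fin 3 → ℕ) (i : Fin 3) (f : MvPolynomial (Fin 3) ℂ) :
    mderiv ν (pderiv i f) = mderiv (ν + Pi.single i 1) f := by
  suffices h : mderiv ν * (pderiv (R := ℂ) i).toLinearMap = mderiv (ν + Pi.single i 1) from
    LinearMap.congr_fun h f
  have c := pderiv_commute
  rw [mderiv_eq_mul, mderiv_eq_mul]
  fin_cases i
  · simp only [Pi.add_apply, Pi.single_apply]
    simp [pow_succ, mul_assoc]
    rw [((c 2 0).pow_left _).eq, ← mul_assoc _ _ (_ ^ ν 2), ((c 1 0).pow_left _).eq, mul_assoc]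
  · simp only [Pi.add_apply, Pi.single_apply]
    simp [pow_succ, mul_assoc]
    rw [((c 2 1).pow_left _).eq]
  · simp only [Pi.add_apply, Pi.single_apply]
    simp [pow_succ, mul_assoc]

theorem X_pow_dvd_taylorAt_iff (p : Fin 3 → ℂ) (f : MvPolynomial (Fin 3) ℂ) (m : ℕ) :
    Polynomial.X ^ m ∣ taylorAt p f ↔
      ∀ ν : Fin 3 → ℕ, ν 0 + ν 1 + ν 2 < m → aeval p (mderiv ν f) = 0 := by
  induction m generalizing f with
  | zero => simp
  | succ m ih =>
    rw [X_pow_succ_dvd_taylorAt_iff]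
    simp only [ih, mderiv_pderiv]
    constructor
    · rintro ⟨h0, h⟩ ν hν
      by_cases hz : ν = 0
      · subst hz; simpa [mderiv] using h0
      · obtain ⟨i, hi⟩ := Function.ne_iff.mp hz
        have hi : 1 ≤ ν i := Nat.one_le_iff_ne_zero.mpr hi
        have e : ν - Pi.single i 1 + Pi.single i 1 = ν :=
          tsub_add_cancel_of_le (by
            intro j
            by_cases hj : j = i
            · subst hj; simpa using hi
            · simp [hj])
        rw [← e]
        apply h
        have := congrArg (fun μ : Fin 3 → ℕ => μ 0 + μ 1 + μ 2) e
        simp only [Pi.add_apply] at this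
        fin_cases i <;> simp at this ⊢ <;> omega
    · intro h
      refine ⟨by simpa [mderiv] using h 0 (by simp), fun i ν hν => h _ ?_⟩
      fin_cases i <;> simp <;> omega

theorem mem_linSys_iff {k : ℕ} {p : Fin k → Fin 3 → ℂ} {d : ℕ} {m : Fin k → ℕ}
    {f : MvPolynomial (Fin 3) ℂ} :
    f ∈ linSys p d m ↔ f.IsHomogeneous d ∧ ∀ i, Polynomial.X ^ m i ∣ taylorAt (p i) f := by
  simp [linSys, X_pow_dvd_taylorAt_iff, Submodule.mem_iInf]

instance finite_homogeneousSubmodule (d : ℕ) :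
    Module.Finite ℂ (homogeneousSubmodule (Fin 3) ℂ d) :=
  Module.Finite.iff_fg.mpr (homogeneousSubmodule_fg (Fin 3) ℂ d)

instance finite_linSys {k : ℕ} (p : Fin k → Fin 3 → ℂ) (d : ℕ) (m : Fin k → ℕ) :
    Module.Finite ℂ (linSys p d m) :=
  Submodule.finiteDimensional_of_le (inf_le_left : _ ≤ homogeneousSubmodule (Fin 3) ℂ d)

theorem finrank_homogeneousSubmodule (d : ℕ) :
    Module.finrank ℂ (homogeneousSubmodule (Fin 3) ℂ d) = (d + 2).choose 2 := by
  rw [homogeneousSubmodule_eq_finsupp_supported,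
    (AddMonoidAlgebra.supportedEquivFinsupp _).finrank_eq]
  have e : {ν : Fin 3 →₀ ℕ | ν.degree = d} =
      (Finset.finsuppAntidiag (Finset.univ : Finset (Fin 3)) d : Set (Fin 3 →₀ ℕ)) := by
    ext ν
    simp [Finsupp.degree_eq_sum]
  rw [e, Module.finrank_finsupp_self]
  simp only [Finset.coe_sort_coe, Fintype.card_coe, Finset.card_finsuppAntidiag_nat_eq_choose]
  rw [Finset.card_univ, Fintype.card_fin, show 3 + d - 1 = d + 2 by omega,
    Nat.choose_symm_add]

/-- Multi-indices of order `m - 1` (none if `m = 0`). -/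
noncomputable def topIndices (m : ℕ) : Finset (Fin 3 →₀ ℕ) :=
  if m = 0 then ∅ else Finset.finsuppAntidiag Finset.univ (m - 1)

theorem card_topIndices (m : ℕ) : (topIndices m).card = (m + 1).choose 2 := by
  cases m with
  | zero => simp [topIndices]
  | succ m =>
    simp only [topIndices, Nat.succ_ne_zero, if_false, Nat.add_sub_cancel,
      Finset.card_finsuppAntidiag_nat_eq_choose]
    rw [Finset.card_univ, Fintype.card_fin, show 3 + m - 1 = m + 2 by omega,
      Nat.choose_symm_add]

theorem mem_topIndices {m : ℕ} {ν : Fin 3 →₀ ℕ} :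
    ν ∈ topIndices m ↔ ν 0 + ν 1 + ν 2 + 1 = m := by
  cases m with
  | zero => simp [topIndices]
  | succ m => simp [topIndices, Fin.sum_univ_three]

theorem X_pow_dvd_taylorAt_of_top (p : Fin 3 → ℂ) {d m : ℕ} {f : MvPolynomial (Fin 3) ℂ}
    (hf : f.IsHomogeneous d) (hm : m ≤ d + 1)
    (h : ∀ ν : Fin 3 → ℕ, ν 0 + ν 1 + ν 2 + 1 = m → aeval p (mderiv ν f) = 0) :
    Polynomial.X ^ m ∣ taylorAt p f := by
  induction m generalizing f d with
  | zero => simp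
  | succ m ih =>
    have hi : ∀ i, Polynomial.X ^ m ∣ taylorAt p (pderiv i f) := by
      intro i
      refine ih hf.pderiv (by omega) fun ν hν => ?_
      rw [mderiv_pderiv]
      apply h
      fin_cases i <;> simp <;> omega
    refine (X_pow_succ_dvd_taylorAt_iff p f m).mpr ⟨?_, hi⟩
    cases m with
    | zero => simpa [mderiv] using h 0 (by simp)
    | succ m =>
      have h0 : ∀ i, aeval p (pderiv i f) = 0 := fun i =>
        ((X_pow_succ_dvd_taylorAt_iff p _ m).mp (hi i)).1
      have := congrArg (aeval p) hf.sum_X_mul_pderiv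
      simp only [map_sum, map_mul, h0, mul_zero, Finset.sum_const_zero, map_nsmul] at this
      rw [nsmul_eq_mul] at this
      exact (mul_eq_zero.mp this.symm).resolve_left (by
        exact_mod_cast (show d ≠ 0 by omega))

/-- The values at the points `p i` of the partial derivatives of order `m i - 1`. -/
noncomputable def topDerivs {k : ℕ} (p : Fin k → Fin 3 → ℂ) (d : ℕ) (m : Fin k → ℕ) :
    homogeneousSubmodule (Fin 3) ℂ d →ₗ[ℂ] ((Σ i, topIndices (m i)) → ℂ) :=
  LinearMap.pi fun j => ((aeval (p j.1)).toLinearMap ∘ₗ mderiv j.2.1) ∘ₗ Submodule.subtype _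

theorem topDerivs_apply {k : ℕ} (p : Fin k → Fin 3 → ℂ) (d : ℕ) (m : Fin k → ℕ)
    (f : homogeneousSubmodule (Fin 3) ℂ d) (j : Σ i, topIndices (m i)) :
    topDerivs p d m f j = aeval (p j.1) (mderiv j.2.1 f.1) := rfl

theorem finrank_linSys_eq {k : ℕ} (p : Fin k → Fin 3 → ℂ) (d : ℕ) (m : Fin k → ℕ)
    (hm : ∀ i, m i ≤ d + 1) :
    Module.finrank ℂ (linSys p d m) = Module.finrank ℂ (LinearMap.ker (topDerivs p d m)) := by
  suffices h : linSys p d m = (LinearMap.ker (topDerivs p d m)).map (Submodule.subtype _) by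
    rw [h, Submodule.finrank_map_subtype_eq]
  refine le_antisymm (fun f hf => ?_) ?_
  · rw [mem_linSys_iff] at hf
    refine ⟨⟨f, hf.1⟩, LinearMap.mem_ker.mpr (funext fun j => ?_), rfl⟩
    refine (X_pow_dvd_taylorAt_iff _ _ _).mp (hf.2 j.1) _ ?_
    have := mem_topIndices.mp j.2.2
    omega
  · rintro _ ⟨⟨f, hf⟩, hk, rfl⟩
    refine mem_linSys_iff.mpr ⟨hf, fun i => X_pow_dvd_taylorAt_of_top _ hf (hm i) fun ν hν => ?_⟩
    exact congrFun (LinearMap.mem_ker.mp hk)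
      ⟨i, Finsupp.equivFunOnFinite.symm ν, mem_topIndices.mpr (by simpa using hν)⟩

/-- Imposing the multiplicities `m` costs at most `∑ mᵢ(mᵢ+1)/2` conditions. -/
theorem choose_le_finrank_linSys_add {k : ℕ} (p : Fin k → Fin 3 → ℂ) (d : ℕ) (m : Fin k → ℕ)
    (hm : ∀ i, m i ≤ d + 1) :
    (d + 2).choose 2 ≤ Module.finrank ℂ (linSys p d m) + ∑ i, (m i + 1).choose 2 := by
  have h1 := (topDerivs p d m).finrank_range_add_finrank_ker
  have h2 : Module.finrank ℂ (LinearMap.range (topDerivs p d m)) ≤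
      ∑ i, (m i + 1).choose 2 := by
    refine (Submodule.finrank_le _).trans_eq ?_
    simp [card_topIndices]
  rw [finrank_homogeneousSubmodule, ← finrank_linSys_eq p d m hm] at h1
  omega

theorem finrank_linSys_le_of_mul {k : ℕ} {p : Fin k → Fin 3 → ℂ} {d e : ℕ} {m m' : Fin k → ℕ}
    (h : linSys p e m' ≠ ⊥) :
    Module.finrank ℂ (linSys p d m) ≤ Module.finrank ℂ (linSys p (d + e) (m + m')) := by
  obtain ⟨q, hq, hq0⟩ := Submodule.exists_mem_ne_zero_of_ne_bot h
  rw [(Submodule.equivMapOfInjective (LinearMap.mulRight ℂ q)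
    (fun _ _ h => mul_right_cancel₀ hq0 h) (linSys p d m)).finrank_eq]
  refine Submodule.finrank_mono ?_
  rintro _ ⟨f, hf, rfl⟩
  rw [SetLike.mem_coe, mem_linSys_iff] at hf
  rw [mem_linSys_iff] at hq
  refine mem_linSys_iff.mpr ⟨hf.1.mul hq.1, fun i => ?_⟩
  rw [LinearMap.mulRight_apply, map_mul, Pi.add_apply, pow_add]
  exact mul_dvd_mul (hf.2 i) (hq.2 i)

theorem le_finrank_linSys_10_6_6 (p : Fin 3 → Fin 3 → ℂ) :
    25 ≤ Module.finrank ℂ (linSys p 10 (qh 2 0)) := by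
  have h := choose_le_finrank_linSys_add p 8 ![0, 4, 4] (by decide)
  have l := choose_le_finrank_linSys_add p 1 ![0, 1, 1] (by decide)
  simp [Fin.sum_univ_succ, Nat.choose_two_right] at h l
  have h1 := finrank_linSys_le_of_mul (d := 8) (m := ![0, 4, 4]) l
  have h2 := finrank_linSys_le_of_mul (d := 9) (m := ![0, 4, 4] + ![0, 1, 1]) l
  rw [show (![0, 4, 4] + ![0, 1, 1] + ![0, 1, 1] : Fin 3 → ℕ) = qh 2 0 by decide] at h2
  exact h.trans (h1.trans h2)

theorem le_finrank_linSys_12_2_6 (p : Fin 5 → Fin 3 → ℂ) :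
    5 ≤ Module.finrank ℂ (linSys p 12 (qh 4 2)) := by
  have h := choose_le_finrank_linSys_add p 8 ![0, 4, 4, 4, 4] (by decide)
  have l := choose_le_finrank_linSys_add p 2 ![1, 1, 1, 1, 1] (by decide)
  simp [Fin.sum_univ_succ, Nat.choose_two_right] at h l
  have h1 := finrank_linSys_le_of_mul (d := 8) (m := ![0, 4, 4, 4, 4]) l
  have h2 := finrank_linSys_le_of_mul (d := 10) (m := ![0, 4, 4, 4, 4] + ![1, 1, 1, 1, 1]) l
  rw [show (![0, 4, 4, 4, 4] + ![1, 1, 1, 1, 1] + ![1, 1, 1, 1, 1] : Fin 5 → ℕ) = qh 4 2 by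
    decide] at h2
  exact h.trans (h1.trans h2)

theorem le_finrank_linSys_10_6_6_6 (p : Fin 4 → Fin 3 → ℂ) :
    6 ≤ Module.finrank ℂ (linSys p 10 (qh 3 0)) := by
  have h := choose_le_finrank_linSys_add p 4 ![0, 2, 2, 2] (by decide)
  have l := choose_le_finrank_linSys_add p 1 ![0, 1, 1, 0] (by decide)
  have l' := choose_le_finrank_linSys_add p 1 ![0, 1, 0, 1] (by decide)
  have l'' := choose_le_finrank_linSys_add p 1 ![0, 0, 1, 1] (by decide)
  simp [Fin.sum_univ_succ, Nat.choose_two_right] at h l l' l''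
  have h1 := finrank_linSys_le_of_mul (d := 4) (m := ![0, 2, 2, 2]) l
  have h2 := finrank_linSys_le_of_mul (d := 4 + 1) (m := ![0, 2, 2, 2] + ![0, 1, 1, 0]) l
  have h3 := finrank_linSys_le_of_mul (d := 4 + 1 + 1)
    (m := ![0, 2, 2, 2] + ![0, 1, 1, 0] + ![0, 1, 1, 0]) l'
  have h4 := finrank_linSys_le_of_mul (d := 4 + 1 + 1 + 1)
    (m := ![0, 2, 2, 2] + ![0, 1, 1, 0] + ![0, 1, 1, 0] + ![0, 1, 0, 1]) l'
  have h5 := finrank_linSys_le_of_mul (d := 4 + 1 + 1 + 1 + 1)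
    (m := ![0, 2, 2, 2] + ![0, 1, 1, 0] + ![0, 1, 1, 0] + ![0, 1, 0, 1] + ![0, 1, 0, 1]) l''
  have h6 := finrank_linSys_le_of_mul (d := 4 + 1 + 1 + 1 + 1 + 1)
    (m := ![0, 2, 2, 2] + ![0, 1, 1, 0] + ![0, 1, 1, 0] + ![0, 1, 0, 1] + ![0, 1, 0, 1] +
      ![0, 0, 1, 1]) l''
  rw [show (![0, 2, 2, 2] + ![0, 1, 1, 0] + ![0, 1, 1, 0] + ![0, 1, 0, 1] + ![0, 1, 0, 1] +
      ![0, 0, 1, 1] + ![0, 0, 1, 1] : Fin 4 → ℕ) = qh 3 0 by decide] at h6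
  exact h.trans (h1.trans (h2.trans (h3.trans (h4.trans (h5.trans h6)))))

theorem le_finrank_linSys_14_4_6 (p : Fin 6 → Fin 3 → ℂ) :
    6 ≤ Module.finrank ℂ (linSys p 14 (qh 5 4)) := by
  have h := choose_le_finrank_linSys_add p 10 ![4, 4, 4, 4, 4, 4] (by decide)
  have l := choose_le_finrank_linSys_add p 2 ![0, 1, 1, 1, 1, 1] (by decide)
  simp [Fin.sum_univ_succ, Nat.choose_two_right] at h l
  have h1 := finrank_linSys_le_of_mul (d := 10) (m := ![4, 4, 4, 4, 4, 4]) l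
  have h2 := finrank_linSys_le_of_mul (d := 12)
    (m := ![4, 4, 4, 4, 4, 4] + ![0, 1, 1, 1, 1, 1]) l
  rw [show (![4, 4, 4, 4, 4, 4] + ![0, 1, 1, 1, 1, 1] + ![0, 1, 1, 1, 1, 1] : Fin 6 → ℕ) =
    qh 5 4 by decide] at h2
  exact h.trans (h1.trans h2)

theorem aeval_C_mul_of_isHomogeneous {d : ℕ} {f : MvPolynomial (Fin 3) ℂ}
    (hf : f.IsHomogeneous d) (c : ℂ) (φ : Fin 3 → Polynomial ℂ) :
    aeval (fun i => Polynomial.C c * φ i) f = Polynomial.C (c ^ d) * aeval φ f := by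
  simp only [aeval_def, eval₂_eq, Finset.mul_sum]
  refine Finset.sum_congr rfl fun ν hν => ?_
  have hd : ∑ i ∈ ν.support, ν i = d := by
    simpa [Finsupp.degree] using (hf.degree_eq_sum_deg_support hν).symm
  simp only [mul_pow, Finset.prod_mul_distrib, Finset.prod_pow_eq_pow_sum, hd, map_pow]
  ring

/-- A parametrised curve through a point of multiplicity `m` meets the plane curve with
multiplicity at least `m`. -/
theorem X_sub_C_pow_dvd_aeval {d m : ℕ} {f : MvPolynomial (Fin 3) ℂ} (hf : f.IsHomogeneous d)
    {p : Fin 3 → ℂ} (φ : Fin 3 → Polynomial ℂ) {c t : ℂ} (hc : c ≠ 0)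
    (hp : ∀ i, p i = c * (φ i).eval t) (h : Polynomial.X ^ m ∣ taylorAt p f) :
    (Polynomial.X - Polynomial.C t) ^ m ∣ aeval φ f := by
  have hψ : ∀ i, ∃ ψ, φ i - Polynomial.C ((φ i).eval t) = (Polynomial.X - Polynomial.C t) * ψ :=
    fun i => Polynomial.X_sub_C_dvd_sub_C_eval
  choose ψ hψ using hψ
  let E : Polynomial (MvPolynomial (Fin 3) ℂ) →+* Polynomial ℂ :=
    Polynomial.eval₂RingHom (aeval fun i => Polynomial.C c * ψ i : _ →ₐ[ℂ] _).toRingHom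
      (Polynomial.X - Polynomial.C t)
  have hE : E.comp (taylorAt p).toRingHom =
      (aeval fun i => Polynomial.C c * φ i : _ →ₐ[ℂ] _).toRingHom := by
    refine MvPolynomial.ringHom_ext (fun a => ?_) fun i => ?_
    · simp [E]
    · have := hψ i
      simp only [E, RingHom.comp_apply, AlgHom.toRingHom_eq_coe, RingHom.coe_coe, taylorAt_X,
        Polynomial.coe_eval₂RingHom, Polynomial.eval₂_add, Polynomial.eval₂_mul,
        Polynomial.eval₂_C, Polynomial.eval₂_X, algHom_C, aeval_X, hp,
        Polynomial.algebraMap_eq, Polynomial.C_mul]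
      linear_combination -Polynomial.C c * this
  have h1 := map_dvd E h
  have h2 : E (taylorAt p f) = _ := RingHom.congr_fun hE f
  rw [h2] at h1
  simp only [map_pow, AlgHom.toRingHom_eq_coe, RingHom.coe_coe,
    aeval_C_mul_of_isHomogeneous hf] at h1
  have hX : E Polynomial.X = Polynomial.X - Polynomial.C t := by simp [E]
  rw [hX] at h1
  refine (IsUnit.dvd_mul_left ?_).mp h1
  exact (Polynomial.isUnit_C.mpr (IsUnit.mk0 c hc)).pow d

/-- `φ` parametrises the plane curve `Q = 0` of degree `e`. -/
structure IsParametrization (e : ℕ) (Q : MvPolynomial (Fin 3) ℂ) (φ : Fin 3 → Polynomial ℂ) :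
    Prop where
  isHomogeneous : Q.IsHomogeneous e
  natDegree_le : ∀ i, (φ i).natDegree ≤ e
  dvd : ∀ {d : ℕ} {f : MvPolynomial (Fin 3) ℂ}, f.IsHomogeneous d → aeval φ f = 0 → Q ∣ f

theorem exists_isHomogeneous_of_dvd {d e : ℕ} {f Q : MvPolynomial (Fin 3) ℂ}
    (hf : f.IsHomogeneous (d + e)) (hQ : Q.IsHomogeneous e) (h : Q ∣ f) :
    ∃ g : MvPolynomial (Fin 3) ℂ, g.IsHomogeneous d ∧ f = g * Q := by
  obtain ⟨g, rfl⟩ := h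
  refine ⟨homogeneousComponent d g, homogeneousComponent_isHomogeneous d g, ?_⟩
  have h1 := homogeneousComponent_eq_self hf
  rw [← h1]
  conv_lhs => rw [← sum_homogeneousComponent g, Finset.mul_sum, map_sum]
  have h2 : ∀ i, homogeneousComponent (d + e) (Q * homogeneousComponent i g) =
      if i = d then homogeneousComponent i g * Q else 0 := by
    intro i
    rw [mul_comm, homogeneousComponent_of_mem
      ((homogeneousComponent_isHomogeneous i g).mul hQ)]
    simp [eq_comm]
  rw [Finset.sum_congr rfl fun i _ => h2 i, Finset.sum_ite_eq']
  split_ifs with hd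
  · rfl
  · rw [homogeneousComponent_eq_zero, zero_mul]
    simpa using hd

theorem X_pow_dvd_of_dvd_mul {R : Type*} [CommRing R] [IsDomain R] {a b : Polynomial R} {m n : ℕ}
    (h : Polynomial.X ^ m ∣ a * b) (hn : n = 0 ∨ (¬ Polynomial.X ∣ b ∧ n ≤ m) ∨
      (¬ Polynomial.X ^ 2 ∣ b ∧ n + 1 ≤ m)) : Polynomial.X ^ n ∣ a := by
  have hX : Prime (Polynomial.X : Polynomial R) := Polynomial.prime_X
  rcases hn with rfl | ⟨hb, hn⟩ | ⟨hb, hn⟩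
  · simp
  · exact (pow_dvd_pow _ hn).trans (hX.pow_dvd_of_dvd_mul_right _ hb h)
  · by_cases hb1 : Polynomial.X ∣ b
    · obtain ⟨b, rfl⟩ := hb1
      have hb2 : ¬ Polynomial.X ∣ b := fun h2 => hb (by rw [pow_two]; exact mul_dvd_mul_left _ h2)
      have h3 := (pow_dvd_pow _ hn).trans h
      rw [mul_left_comm, pow_succ', mul_dvd_mul_iff_left hX.ne_zero] at h3
      exact hX.pow_dvd_of_dvd_mul_right _ hb2 h3
    · exact (pow_dvd_pow _ (by omega)).trans (hX.pow_dvd_of_dvd_mul_right _ hb1 h)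

/-- Splitting off a parametrised curve `Q = 0` from a linear system. -/
theorem finrank_linSys_le_add {e : ℕ} {Q : MvPolynomial (Fin 3) ℂ} {φ : Fin 3 → Polynomial ℂ}
    (hQ : IsParametrization e Q φ) {k : ℕ} {p : Fin k → Fin 3 → ℂ} {d r : ℕ} {m m' : Fin k → ℕ}
    (s : Finset (Fin k)) (t c : Fin k → ℂ) (ht : Set.InjOn t s) (hc : ∀ i ∈ s, c i ≠ 0)
    (hp : ∀ i ∈ s, ∀ j, p i j = c i * (φ j).eval (t i))
    (hr : (d + e) * e < ∑ i ∈ s, m i + r)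
    (hm : ∀ i, m' i = 0 ∨ (aeval (p i) Q ≠ 0 ∧ m' i ≤ m i) ∨
      ((∃ j, aeval (p i) (pderiv j Q) ≠ 0) ∧ m' i + 1 ≤ m i)) :
    Module.finrank ℂ (linSys p (d + e) m) ≤ Module.finrank ℂ (linSys p d m') + r := by
  let Φ : linSys p (d + e) m →ₗ[ℂ] Polynomial ℂ := (aeval φ).toLinearMap ∘ₗ Submodule.subtype _
  have h1 := Φ.finrank_range_add_finrank_ker
  have h2 : Module.finrank ℂ (LinearMap.range Φ) ≤ r := by
    have hr' : Module.finrank ℂ (Polynomial.degreeLT ℂ r) = r := by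
      rw [(Polynomial.degreeLTEquiv ℂ r).finrank_eq, Module.finrank_fin_fun]
    have : Module.Finite ℂ (Polynomial.degreeLT ℂ r) :=
      Module.Finite.equiv (Polynomial.degreeLTEquiv ℂ r).symm
    let D : Polynomial ℂ := ∏ i ∈ s, (Polynomial.X - Polynomial.C (t i)) ^ m i
    have hD : D.Monic := Polynomial.monic_prod_of_monic _ _ fun i _ =>
      (Polynomial.monic_X_sub_C _).pow _
    have hDdeg : D.natDegree = ∑ i ∈ s, m i := by
      rw [Polynomial.natDegree_prod_of_monic _ _ fun i _ => (Polynomial.monic_X_sub_C _).pow _]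
      simp
    refine (Submodule.finrank_mono ?_).trans
      ((Submodule.finrank_map_le (LinearMap.mulLeft ℂ D) (Polynomial.degreeLT ℂ r)).trans_eq hr')
    rintro _ ⟨⟨f, hf⟩, rfl⟩
    rw [mem_linSys_iff] at hf
    have hdvd : D ∣ aeval φ f := by
      refine Finset.prod_dvd_of_coprime (fun i hi j hj hij => ?_) fun i hi =>
        X_sub_C_pow_dvd_aeval hf.1 φ (hc i hi) (hp i hi) (hf.2 i)
      exact (Polynomial.isCoprime_X_sub_C_of_isUnit_sub
        (sub_ne_zero.mpr (ht.ne hi hj hij)).isUnit).pow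
    obtain ⟨h, hh⟩ := hdvd
    refine ⟨h, ?_, hh.symm⟩
    rw [SetLike.mem_coe, Polynomial.mem_degreeLT]
    by_cases h0 : h = 0
    · rw [h0, Polynomial.degree_zero]; exact WithBot.bot_lt_coe _
    · rw [Polynomial.degree_eq_natDegree h0, Nat.cast_lt]
      have := MvPolynomial.aeval_natDegree_le f hf.1.totalDegree_le φ hQ.natDegree_le
      rw [hh, hD.natDegree_mul' h0, hDdeg] at this
      omega
  have h3 : Module.finrank ℂ (LinearMap.ker Φ) ≤ Module.finrank ℂ (linSys p d m') := by
    rw [← Submodule.finrank_map_subtype_eq]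
    refine (Submodule.finrank_mono ?_).trans
      (Submodule.finrank_map_le (LinearMap.mulRight ℂ Q) (linSys p d m'))
    rintro _ ⟨⟨f, hf⟩, hk, rfl⟩
    rw [mem_linSys_iff] at hf
    obtain ⟨g, hg, hfg⟩ := exists_isHomogeneous_of_dvd hf.1 hQ.isHomogeneous
      (hQ.dvd hf.1 (LinearMap.mem_ker.mp hk))
    refine ⟨g, mem_linSys_iff.mpr ⟨hg, fun i => ?_⟩, hfg.symm⟩
    have hi := hf.2 i
    rw [hfg, map_mul] at hi
    refine X_pow_dvd_of_dvd_mul hi ((hm i).imp_right (Or.imp ?_ ?_))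
    · refine And.imp_left fun h => ?_
      rwa [Polynomial.X_dvd_iff, taylorAt_coeff_zero, map_eq_zero_iff _ (C_injective _ _)]
    · refine And.imp_left fun ⟨j, hj⟩ h => hj ?_
      have := ((X_pow_succ_dvd_taylorAt_iff (p i) Q 1).mp h).2 j
      rwa [pow_one, Polynomial.X_dvd_iff, taylorAt_coeff_zero,
        map_eq_zero_iff _ (C_injective _ _)] at this
  omega

theorem linearMap_prod_apply_eq_sum {ι V : Type*} [Fintype ι] [DecidableEq ι] [AddCommGroup V]
    [Module ℂ V] (β : (ι → ℂ) × V →ₗ[ℂ] ℂ) (u : ι → ℂ) (v : V) :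
    β (u, v) = ∑ w, β (Pi.single w 1, 0) * u w + β (0, v) := by
  have h : (u, v) = LinearMap.inl ℂ (ι → ℂ) V u + (0, v) := by simp
  rw [h, map_add, ← LinearMap.comp_apply, LinearMap.pi_apply_eq_sum_univ]
  congr 1
  refine Finset.sum_congr rfl fun w _ => ?_
  rw [smul_eq_mul, mul_comm, LinearMap.comp_apply, LinearMap.inl_apply]
  congr 3
  ext j
  simp [Pi.single_apply, eq_comm]

theorem generically_finrank_linSys_le {k d r : ℕ} {m : Fin k → ℕ} (hm : ∀ i, m i ≤ d + 1)
    (q : Fin k → Fin 3 → ℂ) (hq : Module.finrank ℂ (linSys q d m) ≤ r) :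
    Generically k fun p => Module.finrank ℂ (linSys p d m) ≤ r := by
  classical
  let V := homogeneousSubmodule (Fin 3) ℂ d
  let W := (Σ i, topIndices (m i)) → ℂ
  let K := LinearMap.ker (topDerivs q d m)
  obtain ⟨π, hπ⟩ := LinearMap.exists_leftInverse_of_injective (K := ℂ) (V := K) (V' := V)
    K.subtype (Submodule.ker_subtype _)
  have hinj : LinearMap.ker ((topDerivs q d m).prod π) = ⊥ := by
    rw [LinearMap.ker_prod, Submodule.eq_bot_iff]
    rintro f ⟨hf, hf'⟩
    have h : π f = ⟨f, hf⟩ := LinearMap.congr_fun hπ (⟨f, hf⟩ : K)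
    rw [LinearMap.mem_ker.mp hf'] at h
    exact congrArg Subtype.val h.symm
  obtain ⟨G, hG⟩ := LinearMap.exists_leftInverse_of_injective (K := ℂ) (V := V) (V' := W × K)
    ((topDerivs q d m).prod π) hinj
  let T : (Fin k → Fin 3 → ℂ) → V →ₗ[ℂ] V := fun p => G ∘ₗ (topDerivs p d m).prod π
  let b := Module.finBasis ℂ V
  let β := fun i => b.coord i ∘ₗ G
  let M : Matrix _ _ (MvPolynomial (Fin k × Fin 3) ℂ) := Matrix.of fun i j =>
    ∑ w : Σ i, topIndices (m i), C (β i (Pi.single w 1, 0)) *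
      rename (Prod.mk w.1) (mderiv w.2.1 (b j).1) + C (β i (0, π (b j)))
  have hM : ∀ p, eval (fun x => p x.1 x.2) M.det = LinearMap.det (T p) := by
    intro p
    rw [RingHom.map_det, ← LinearMap.det_toMatrix b]
    congr 1
    ext i j
    have h2 : LinearMap.toMatrix b b (T p) i j = β i (topDerivs p d m (b j), π (b j)) := by
      rw [LinearMap.toMatrix_apply]
      rfl
    rw [h2, linearMap_prod_apply_eq_sum]
    simp only [M, RingHom.mapMatrix_apply, Matrix.map_apply, Matrix.of_apply, map_add, map_sum,
      map_mul, eval_C, eval_rename, topDerivs_apply, aeval_eq_eval]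
    rfl
  refine ⟨M.det, fun h0 => ?_, fun p _ hp => ?_⟩
  · have := hM q
    rw [h0, map_zero, show T q = LinearMap.id from hG, LinearMap.det_id] at this
    exact zero_ne_one this
  · rw [hM] at hp
    have hT : Function.Injective (T p) :=
      (LinearMap.equivOfDetNeZero (T p) hp).injective
    rw [finrank_linSys_eq p d m hm]
    rw [finrank_linSys_eq q d m hm] at hq
    refine le_trans (LinearMap.finrank_le_finrank_of_injective
      (f := π ∘ₗ (LinearMap.ker (topDerivs p d m)).subtype) ?_) hq
    rintro ⟨f, hf⟩ ⟨g, hg⟩ hfg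
    refine Subtype.ext (hT (congrArg G (Prod.ext ?_ hfg)))
    exact (LinearMap.mem_ker.mp hf).trans (LinearMap.mem_ker.mp hg).symm

theorem dvd_sub_of_forall_monomial {d : ℕ} {f Q : MvPolynomial (Fin 3) ℂ}
    (hf : f.IsHomogeneous d) (L : MvPolynomial (Fin 3) ℂ →ₗ[ℂ] MvPolynomial (Fin 3) ℂ)
    (h : ∀ a b c : ℕ, a + b + c = d → Q ∣ L (X 0 ^ a * X 1 ^ b * X 2 ^ c)) : Q ∣ L f := by
  rw [f.as_sum, map_sum]
  refine Finset.dvd_sum fun ν hν => ?_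
  have e : monomial ν (coeff ν f) = coeff ν f • (X 0 ^ ν 0 * X 1 ^ ν 1 * X 2 ^ ν 2) := by
    rw [monomial_eq, Finsupp.prod_fintype _ _ (by simp), Fin.prod_univ_three, smul_eq_C_mul]
  rw [e, map_smul, smul_eq_C_mul]
  refine dvd_mul_of_dvd_right (h _ _ _ ?_) _
  have := hf.degree_eq_sum_deg_support hν
  rw [← Finsupp.degree_apply, Finsupp.degree_eq_sum, Fin.sum_univ_three] at this
  exact this.symm

theorem dvd_of_aeval_eq_zero {d : ℕ} {f Q : MvPolynomial (Fin 3) ℂ} {φ : Fin 3 → Polynomial ℂ}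
    (hf : f.IsHomogeneous d) (M : ℕ → MvPolynomial (Fin 3) ℂ)
    (h : ∀ a b c : ℕ, a + b + c = d → Q ∣ X 0 ^ a * X 1 ^ b * X 2 ^ c -
      (Polynomial.basisMonomials ℂ).constr ℂ M (φ 0 ^ a * φ 1 ^ b * φ 2 ^ c))
    (h0 : aeval φ f = 0) : Q ∣ f := by
  have := dvd_sub_of_forall_monomial (Q := Q) hf
    (LinearMap.id - ((Polynomial.basisMonomials ℂ).constr ℂ M) ∘ₗ (aeval φ).toLinearMap)
    fun a b c habc => by simpa using h a b c habc
  simpa [h0] using this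

theorem constr_basisMonomials_X_pow (M : ℕ → MvPolynomial (Fin 3) ℂ) (n : ℕ) :
    (Polynomial.basisMonomials ℂ).constr ℂ M (Polynomial.X ^ n) = M n := by
  rw [← Polynomial.monomial_one_right_eq_X_pow]
  simpa only [Polynomial.coe_basisMonomials] using
    (Polynomial.basisMonomials ℂ).constr_basis ℂ M n

theorem isParametrization_conic :
    IsParametrization 2 (X 0 * X 2 - X 1 ^ 2) ![1, Polynomial.X, Polynomial.X ^ 2] where
  isHomogeneous := ((isHomogeneous_X ℂ 0).mul (isHomogeneous_X ℂ 2)).sub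
    (isHomogeneous_X_pow 1 2)
  natDegree_le i := by fin_cases i <;> simp
  dvd {d f} hf h0 := by
    refine dvd_of_aeval_eq_zero hf (fun j =>
      if j ≤ d then X 0 ^ (d - j) * X 1 ^ j else X 1 ^ (2 * d - j) * X 2 ^ (j - d)) ?_ h0
    intro a b c habc
    have e : (![1, Polynomial.X, Polynomial.X ^ 2] 0 : Polynomial ℂ) ^ a *
        (![1, Polynomial.X, Polynomial.X ^ 2] 1 : Polynomial ℂ) ^ b *
        (![1, Polynomial.X, Polynomial.X ^ 2] 2 : Polynomial ℂ) ^ c =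
        Polynomial.X ^ (b + 2 * c) := by
      simp [pow_add, pow_mul]
    rw [e, constr_basisMonomials_X_pow]
    have key : ∀ n, (X 0 * X 2 - X 1 ^ 2 : MvPolynomial (Fin 3) ℂ) ∣
        (X 0 * X 2) ^ n - (X 1 ^ 2) ^ n := fun n => sub_dvd_pow_sub_pow _ _ n
    split_ifs with hj
    · obtain ⟨u, rfl⟩ : ∃ u, a = u + c := ⟨a - c, by omega⟩
      rw [show d - (b + 2 * c) = u by omega]
      refine (dvd_mul_of_dvd_right (key c) (X 0 ^ u * X 1 ^ b)).trans (dvd_of_eq ?_)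
      ring
    · obtain ⟨u, rfl⟩ : ∃ u, c = u + a := ⟨c - a, by omega⟩
      rw [show 2 * d - (b + 2 * (u + a)) = b + 2 * a by omega,
        show b + 2 * (u + a) - d = u by omega]
      refine (dvd_mul_of_dvd_right (key a) (X 1 ^ b * X 2 ^ u)).trans (dvd_of_eq ?_)
      ring

theorem isParametrization_line :
    IsParametrization 1 (X 2) ![1, Polynomial.X, 0] where
  isHomogeneous := isHomogeneous_X ℂ 2
  natDegree_le i := by fin_cases i <;> simp
  dvd {d f} hf h0 := by
    refine dvd_of_aeval_eq_zero hf (fun j => X 0 ^ (d - j) * X 1 ^ j) ?_ h0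
    intro a b c habc
    cases c with
    | zero =>
      have e : (![1, Polynomial.X, 0] 0 : Polynomial ℂ) ^ a *
          (![1, Polynomial.X, 0] 1 : Polynomial ℂ) ^ b *
          (![1, Polynomial.X, 0] 2 : Polynomial ℂ) ^ 0 = Polynomial.X ^ b := by simp
      rw [e, constr_basisMonomials_X_pow, show d - b = a by omega]
      simp
    | succ c => simp [pow_succ, ← mul_assoc]

theorem IsParametrization.linearChange {e : ℕ} {Q : MvPolynomial (Fin 3) ℂ}
    {φ φ' : Fin 3 → Polynomial ℂ} (h : IsParametrization e Q φ)
    {a l : Fin 3 → MvPolynomial (Fin 3) ℂ} (ha : ∀ i, (a i).IsHomogeneous 1)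
    (hl : ∀ i, (l i).IsHomogeneous 1) (hal : ∀ i, aeval l (a i) = X i)
    (hφ : ∀ i, aeval φ (a i) = φ' i) : IsParametrization e (aeval l Q) φ' where
  isHomogeneous := by simpa using h.isHomogeneous.aeval l hl
  natDegree_le i := by
    rw [← hφ]
    simpa using aeval_natDegree_le (a i) (ha i).totalDegree_le φ h.natDegree_le
  dvd {d f} hf h0 := by
    have h1 : (aeval a f).IsHomogeneous d := by simpa using hf.aeval a ha
    have h2 : aeval φ (aeval a f) = 0 := by
      rw [← h0, ← AlgHom.comp_apply, comp_aeval]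
      simp only [hφ]
    have h3 := map_dvd (aeval l) (h.dvd h1 h2)
    rwa [← AlgHom.comp_apply (aeval l) (aeval a) f, comp_aeval, funext hal, aeval_X_left,
      AlgHom.id_apply] at h3

theorem finrank_linSys_le_add_of_curve {e k : ℕ} {Q : MvPolynomial (Fin 3) ℂ}
    {φ : Fin 3 → Polynomial ℂ} (hQ : IsParametrization e Q φ) {p : Fin k → Fin 3 → ℂ}
    (s : Finset (Fin k)) (t c : Fin k → ℂ) (ht : Set.InjOn t s) (hc : ∀ i ∈ s, c i ≠ 0)
    (hp : ∀ i ∈ s, ∀ j, p i j = c i * (φ j).eval (t i))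
    (hS : ∀ i ∈ s, ∃ j, aeval (p i) (pderiv j Q) ≠ 0) (hN : ∀ i ∉ s, aeval (p i) Q ≠ 0)
    (d d' r : ℕ) (m m' : Fin k → ℕ) (hd : d = d' + e) (hr : d * e < ∑ i ∈ s, m i + r)
    (hm : ∀ i, m' i = 0 ∨ (i ∉ s ∧ m' i ≤ m i) ∨ (i ∈ s ∧ m' i + 1 ≤ m i)) :
    Module.finrank ℂ (linSys p d m) ≤ Module.finrank ℂ (linSys p d' m') + r := by
  subst hd
  exact finrank_linSys_le_add hQ s t c ht hc hp hr fun i =>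
    (hm i).imp_right (Or.imp (fun h => ⟨hN i h.1, h.2⟩) fun h => ⟨hS i h.1, h.2⟩)

theorem finrank_linSys_le_choose {k : ℕ} (p : Fin k → Fin 3 → ℂ) (d : ℕ) (m : Fin k → ℕ) :
    Module.finrank ℂ (linSys p d m) ≤ (d + 2).choose 2 := by
  rw [← finrank_homogeneousSubmodule d]
  exact Submodule.finrank_mono inf_le_left

theorem finrank_linSys_10_6_6_le :
    Module.finrank ℂ (linSys ![![0, 0, 1], ![1, 0, 0], ![1, 1, 0]] 10 (qh 2 0)) ≤ 25 := by
  have step := finrank_linSys_le_add_of_curve isParametrization_line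
    (p := ![![0, 0, 1], ![1, 0, 0], ![1, 1, 0]]) {1, 2} ![0, 0, 1] ![0, 1, 1]
    (by simp [Set.InjOn]) (by simp) (by simp [Fin.forall_fin_succ])
    (by simp [Fin.exists_fin_succ, pderiv_X]) (by simp [Fin.forall_fin_succ])
  have h1 := step 10 9 0 (qh 2 0) ![0, 5, 5] rfl (by decide) (by decide)
  have h2 := step 9 8 0 ![0, 5, 5] ![0, 4, 4] rfl (by decide) (by decide)
  have h3 := step 8 7 1 ![0, 4, 4] ![0, 3, 3] rfl (by decide) (by decide)
  have h4 := step 7 6 2 ![0, 3, 3] ![0, 2, 2] rfl (by decide) (by decide)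
  have h5 := step 6 5 3 ![0, 2, 2] ![0, 1, 1] rfl (by decide) (by decide)
  have h6 := step 5 4 4 ![0, 1, 1] ![0, 0, 0] rfl (by decide) (by decide)
  have h7 := finrank_linSys_le_choose ![![0, 0, 1], ![1, 0, 0], ![1, 1, 0]] 4 ![0, 0, 0]
  norm_num [Nat.choose_two_right] at h7
  omega

theorem finrank_linSys_12_2_6_le :
    Module.finrank ℂ (linSys ![![1, 0, 0], ![1, 1, 1], ![1, 2, 4], ![1, 3, 9], ![1, 4, 16]] 12
      (qh 4 2)) ≤ 5 := by
  have step := finrank_linSys_le_add_of_curve isParametrization_conic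
    (p := ![![1, 0, 0], ![1, 1, 1], ![1, 2, 4], ![1, 3, 9], ![1, 4, 16]]) Finset.univ
    ![0, 1, 2, 3, 4] 1 (by simp [Set.InjOn, Fin.forall_fin_succ]) (by simp)
    (by simp [Fin.forall_fin_succ]; norm_num)
    (by simp [Fin.forall_fin_succ, Fin.exists_fin_succ, pderiv_X]) (by simp)
  have h1 := step 12 10 0 (qh 4 2) ![1, 5, 5, 5, 5] rfl (by decide) (by decide)
  have h2 := step 10 8 0 ![1, 5, 5, 5, 5] ![0, 4, 4, 4, 4] rfl (by decide) (by decide)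
  have h3 := step 8 6 1 ![0, 4, 4, 4, 4] ![0, 3, 3, 3, 3] rfl (by decide) (by decide)
  have h4 := step 6 4 1 ![0, 3, 3, 3, 3] ![0, 2, 2, 2, 2] rfl (by decide) (by decide)
  have h5 := step 4 2 1 ![0, 2, 2, 2, 2] ![0, 1, 1, 1, 1] rfl (by decide) (by decide)
  have h6 := step 2 0 1 ![0, 1, 1, 1, 1] ![0, 0, 0, 0, 0] rfl (by decide) (by decide)
  have h7 := finrank_linSys_le_choose
    ![![1, 0, 0], ![1, 1, 1], ![1, 2, 4], ![1, 3, 9], ![1, 4, 16]] 0 ![0, 0, 0, 0, 0]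
  norm_num [Nat.choose_two_right] at h7
  omega

theorem isParametrization_line_of_involution {l : Fin 3 → MvPolynomial (Fin 3) ℂ}
    {φ : Fin 3 → Polynomial ℂ} (hl : ∀ i, (l i).IsHomogeneous 1)
    (h : ∀ i, aeval l (l i) = X i) (hφ : ∀ i, aeval ![1, Polynomial.X, 0] (l i) = φ i) :
    IsParametrization 1 (l 2) φ := by
  simpa using isParametrization_line.linearChange hl hl h hφ

theorem isParametrization_line_one :
    IsParametrization 1 (X 1) ![1, 0, Polynomial.X] :=
  isParametrization_line_of_involution (l := ![X 0, X 2, X 1])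
    (by simp [Fin.forall_fin_succ, isHomogeneous_X]) (by simp [Fin.forall_fin_succ])
    (by simp [Fin.forall_fin_succ])

theorem finrank_linSys_10_6_6_6_le :
    Module.finrank ℂ (linSys ![![1, 1, 1], ![1, 0, 0], ![1, 1, 0], ![1, 0, 1]] 10 (qh 3 0)) ≤
      6 := by
  set p : Fin 4 → Fin 3 → ℂ := ![![1, 1, 1], ![1, 0, 0], ![1, 1, 0], ![1, 0, 1]] with hp
  have hline : IsParametrization 1 (X 0 - X 1 - X 2)
      ![1, Polynomial.X, 1 - Polynomial.X] :=
    isParametrization_line_of_involution (l := ![X 0, X 1, X 0 - X 1 - X 2])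
      (by simp [Fin.forall_fin_succ, isHomogeneous_X, IsHomogeneous.sub])
      (by simp [Fin.forall_fin_succ])
      (by simp [Fin.forall_fin_succ])
  have a := finrank_linSys_le_add_of_curve isParametrization_line
    (p := p) {1, 2} ![0, 0, 1, 0] 1
    (by simp [Set.InjOn]) (by simp) (by simp [hp, Fin.forall_fin_succ])
    (by simp [hp, Fin.exists_fin_succ, pderiv_X]) (by simp [hp, Fin.forall_fin_succ])
  have b := finrank_linSys_le_add_of_curve isParametrization_line_one
    (p := p) {1, 3} ![0, 0, 0, 1] 1
    (by simp [Set.InjOn]) (by simp) (by simp [hp, Fin.forall_fin_succ])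
    (by simp [hp, Fin.exists_fin_succ, pderiv_X]) (by simp [hp, Fin.forall_fin_succ])
  have c := finrank_linSys_le_add_of_curve hline
    (p := p) {2, 3} ![0, 0, 1, 0] 1
    (by simp [Set.InjOn]) (by simp) (by simp [hp, Fin.forall_fin_succ])
    (by simp [hp, Fin.exists_fin_succ, pderiv_X]) (by simp [hp, Fin.forall_fin_succ])
  have h1 := a 10 9 0 (qh 3 0) ![0, 5, 5, 6] rfl (by decide) (by decide)
  have h2 := a 9 8 0 ![0, 5, 5, 6] ![0, 4, 4, 6] rfl (by decide) (by decide)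
  have h3 := b 8 7 0 ![0, 4, 4, 6] ![0, 3, 4, 5] rfl (by decide) (by decide)
  have h4 := b 7 6 0 ![0, 3, 4, 5] ![0, 2, 4, 4] rfl (by decide) (by decide)
  have h5 := c 6 5 0 ![0, 2, 4, 4] ![0, 2, 3, 3] rfl (by decide) (by decide)
  have h6 := c 5 4 0 ![0, 2, 3, 3] ![0, 2, 2, 2] rfl (by decide) (by decide)
  have h7 := a 4 3 1 ![0, 2, 2, 2] ![0, 1, 1, 2] rfl (by decide) (by decide)
  have h8 := b 3 2 1 ![0, 1, 1, 2] ![0, 0, 1, 1] rfl (by decide) (by decide)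
  have h9 := c 2 1 1 ![0, 0, 1, 1] ![0, 0, 0, 0] rfl (by decide) (by decide)
  have h10 := finrank_linSys_le_choose p 1 ![0, 0, 0, 0]
  norm_num [Nat.choose_two_right] at h10
  omega

theorem finrank_linSys_14_4_6_le :
    Module.finrank ℂ (linSys ![![1, 0, -4], ![1, 0, 0], ![1, 1, 1], ![1, -1, 1], ![1, 2, 4],
      ![1, -2, 4]] 14 (qh 5 4)) ≤ 6 := by
  set p : Fin 6 → Fin 3 → ℂ :=
    ![![1, 0, -4], ![1, 0, 0], ![1, 1, 1], ![1, -1, 1], ![1, 2, 4], ![1, -2, 4]] with hp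
  have hconic := isParametrization_conic.linearChange
    (φ' := ![Polynomial.C (1 / 3) * (Polynomial.X ^ 2 - 10), Polynomial.X,
      Polynomial.C (1 / 3) * (40 - Polynomial.X ^ 2)])
    (a := ![C (1 / 3) * (X 2 - C 10 * X 0), X 1, C (1 / 3) * (C 40 * X 0 - X 2)])
    (l := ![C (1 / 10) * (X 0 + X 2), X 1, C 4 * X 0 + X 2])
    (by simp [Fin.forall_fin_succ, isHomogeneous_X, IsHomogeneous.sub,
      isHomogeneous_C_mul_X, IsHomogeneous.C_mul])
    (by simp [Fin.forall_fin_succ, isHomogeneous_X, IsHomogeneous.add, IsHomogeneous.C_mul])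
    (by
      have h3 : (C (1 / 3) * 3 : MvPolynomial (Fin 3) ℂ) = 1 := by
        rw [show (3 : MvPolynomial (Fin 3) ℂ) = C 3 from rfl, ← C_mul]
        norm_num
      have h10 : (C (1 / 10) * 10 : MvPolynomial (Fin 3) ℂ) = 1 := by
        rw [show (10 : MvPolynomial (Fin 3) ℂ) = C 10 from rfl, ← C_mul]
        norm_num
      have e4 : (C 4 : MvPolynomial (Fin 3) ℂ) = 4 := rfl
      have e10 : (C 10 : MvPolynomial (Fin 3) ℂ) = 10 := rfl
      have e40 : (C 40 : MvPolynomial (Fin 3) ℂ) = 40 := rfl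
      rw [Fin.forall_fin_succ, Fin.forall_fin_two]
      refine ⟨?_, ?_, ?_⟩
      · simp [-one_div]
        rw [e4, e10]
        linear_combination X 0 * h3 - C (1 / 3) * (X 0 + X 2) * h10
      · simp
      · simp [-one_div]
        rw [e4, e40]
        linear_combination X 2 * h3 + 4 * C (1 / 3) * (X 0 + X 2) * h10)
    (by simp [Fin.forall_fin_succ, ← map_ofNat Polynomial.C])
  have a := finrank_linSys_le_add_of_curve isParametrization_conic
    (p := p) {1, 2, 3, 4, 5} ![0, 0, 1, -1, 2, -2] 1
    (by simp [Set.InjOn]; norm_num) (by simp) (by simp [hp, Fin.forall_fin_succ]; norm_num)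
    (by simp [hp, Fin.exists_fin_succ, pderiv_X]) (by simp [hp, Fin.forall_fin_succ])
  have b := finrank_linSys_le_add_of_curve isParametrization_line_one
    (p := p) {0, 1} ![-4, 0, 0, 0, 0, 0] 1
    (by simp [Set.InjOn]) (by simp) (by simp [hp, Fin.forall_fin_succ])
    (by simp [hp, Fin.exists_fin_succ, pderiv_X]) (by simp [hp, Fin.forall_fin_succ])
  have c := finrank_linSys_le_add_of_curve hconic
    (p := p) {0, 2, 3, 4, 5} ![0, 0, 5, -5, 4, -4] ![-3 / 10, 0, 1 / 5, 1 / 5, 1 / 2, 1 / 2]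
    (by simp [Set.InjOn]; norm_num) (by simp) (by simp [hp, Fin.forall_fin_succ]; norm_num)
    (by simp [hp, Fin.exists_fin_succ, pderiv_X]; norm_num) (by simp [hp, Fin.forall_fin_succ])
  have h1 := a 14 12 0 (qh 5 4) ![4, 5, 5, 5, 5, 5] rfl (by decide) (by decide)
  have h2 := a 12 10 0 ![4, 5, 5, 5, 5, 5] ![4, 4, 4, 4, 4, 4] rfl (by decide) (by decide)
  have h3 := b 10 9 3 ![4, 4, 4, 4, 4, 4] ![3, 3, 4, 4, 4, 4] rfl (by decide) (by decide)
  have h4 := a 9 7 0 ![3, 3, 4, 4, 4, 4] ![3, 2, 3, 3, 3, 3] rfl (by decide) (by decide)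
  have h5 := c 7 5 0 ![3, 2, 3, 3, 3, 3] ![2, 2, 2, 2, 2, 2] rfl (by decide) (by decide)
  have h6 := b 5 4 2 ![2, 2, 2, 2, 2, 2] ![1, 1, 2, 2, 2, 2] rfl (by decide) (by decide)
  have h7 := a 4 2 0 ![1, 1, 2, 2, 2, 2] ![1, 0, 1, 1, 1, 1] rfl (by decide) (by decide)
  have h8 := c 2 0 0 ![1, 0, 1, 1, 1, 1] ![0, 0, 0, 0, 0, 0] rfl (by decide) (by decide)
  have h9 := finrank_linSys_le_choose p 0 ![0, 0, 0, 0, 0, 0]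
  norm_num [Nat.choose_two_right] at h9
  omega

theorem Generically.projDim_eq {k d r : ℕ} {m : Fin k → ℕ} {v : ℤ} (hm : ∀ i, m i ≤ d + 1)
    (hv : virtDim d m = v) (hvr : max (-1) v < (r : ℤ) - 1)
    (h : ∀ p, r ≤ Module.finrank ℂ (linSys p d m)) (q : Fin k → Fin 3 → ℂ)
    (hq : Module.finrank ℂ (linSys q d m) ≤ r) :
    Generically k fun p => projDim p d m = (r : ℤ) - 1 ∧
      projDim p d m > max (-1) (virtDim d m) := by
  obtain ⟨P, hP, H⟩ := generically_finrank_linSys_le hm q hq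
  refine ⟨P, hP, fun p hp hpP => ?_⟩
  have e : projDim p d m = (r : ℤ) - 1 := by
    rw [projDim, le_antisymm (H p hp hpP) (h p)]
  exact ⟨e, by rw [e, hv]; exact hvr⟩

theorem special_L_2e_family_and_sporadic :
    (∀ e : ℕ, 1 ≤ e → e ≤ 2 →
      virtDim (2 * e + 8) (qh (2 * e) (2 * e - 2)) = -20 * (e : ℤ) + 43 ∧
      Generically (2 * e + 1) (fun p =>
        projDim p (2 * e + 8) (qh (2 * e) (2 * e - 2)) = 44 - 20 * (e : ℤ) ∧
        projDim p (2 * e + 8) (qh (2 * e) (2 * e - 2)) >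
          max (-1) (virtDim (2 * e + 8) (qh (2 * e) (2 * e - 2))))) ∧
    (virtDim 10 (qh 3 0) = 2 ∧
      Generically 4 (fun p =>
        projDim p 10 (qh 3 0) = 5 ∧
        projDim p 10 (qh 3 0) > max (-1) (virtDim 10 (qh 3 0)))) ∧
    (virtDim 14 (qh 5 4) = 4 ∧
      Generically 6 (fun p =>
        projDim p 14 (qh 5 4) = 5 ∧
        projDim p 14 (qh 5 4) > max (-1) (virtDim 14 (qh 5 4)))) := by
  have v1 : virtDim 10 (qh 2 0) = 23 := by decide
  have v2 : virtDim 12 (qh 4 2) = 3 := by decide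
  have v3 : virtDim 10 (qh 3 0) = 2 := by decide
  have v4 : virtDim 14 (qh 5 4) = 4 := by decide
  refine ⟨fun e he he' => ?_, ⟨v3, ?_⟩, v4, ?_⟩
  · interval_cases e
    · exact ⟨v1, Generically.projDim_eq (by decide) v1 (by norm_num) le_finrank_linSys_10_6_6 _
        finrank_linSys_10_6_6_le⟩
    · exact ⟨v2, Generically.projDim_eq (by decide) v2 (by norm_num) le_finrank_linSys_12_2_6 _
        finrank_linSys_12_2_6_le⟩
  · exact Generically.projDim_eq (by decide) v3 (by norm_num) le_finrank_linSys_10_6_6_6 _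
      finrank_linSys_10_6_6_6_le
  · exact Generically.projDim_eq (by decide) v4 (by norm_num) le_finrank_linSys_14_4_6 _
      finrank_linSys_14_4_6_le
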